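/- Let P(z,ε) = Σ_{j=0}^d a_j(ε)·z^j, where each a_j(ε) is a polynomial in ε with complex coefficients and a_d(0) ≠ 0. Let λ₀ be a root of P(·,0) of multiplicity s > 1, and assume there is σ₀ > 0 such that for all ε with 0 < |ε| < σ₀ every root of P(·,ε) is simple. Then there exist δ > 0, σ ∈ (0,σ₀], an integer r ≥ 1, positive integers H₁, …, H_r with H₁ + ⋯ + H_r = s, and functions g₁, …, g_r, each analytic on a neighborhood of 0 in ℂ with g_i(0) = λ₀, such that for every ε with 0 < |ε| < σ the set of roots of P(·,ε) lying in the disk {z : |z − λ₀| < δ} is exactly the union over i = 1, …, r of { g_i(ζ) : ζ ∈ ℂ, ζ^{H_i} = ε }, and this union consists of exactly s distinct points. (Theorem 3.4: near a zero of multiplicity s > 1 the zeros are branches of global analytic functions given by Puiseux series in ε^{1/H_i}, with cycle lengths summing to s.) -/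

import Mathlib

open Filter Topology

lemma idx_continuous {Y : Type*} [TopologicalSpace Y] {d : ℕ} (Φ : Fin d → Y → ℂ)
    (hc : ∀ k, Continuous (Φ k)) (hi : ∀ y, Function.Injective (fun k => Φ k y))
    (f : Y → ℂ) (hf : Continuous f) (c : Y → Fin d) (h : ∀ y, Φ (c y) y = f y) :
    Continuous c := by
  rw [continuous_iff_isClosed]
  intro s _
  have : c ⁻¹' s = ⋃ k ∈ s, {y | Φ k y = f y} := by
    ext y
    simp only [Set.mem_preimage, Set.mem_iUnion, Set.mem_ofPred_eq, exists_prop]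
    constructor
    · intro hy; exact ⟨c y, hy, h y⟩
    · rintro ⟨k, hk, hky⟩
      have : k = c y := hi y (by simp [hky, h y])
      exact this ▸ hk
  rw [this]
  exact Set.Finite.isClosed_biUnion (Set.toFinite s) (fun k _ => isClosed_eq (hc k) hf)

lemma sel_const {Y : Type*} [TopologicalSpace Y] [PreconnectedSpace Y] [Nonempty Y]
    {d : ℕ} (Φ : Fin d → Y → ℂ)
    (hc : ∀ k, Continuous (Φ k)) (hi : ∀ y, Function.Injective (fun k => Φ k y))
    (f : Y → ℂ) (hf : Continuous f) (h : ∀ y, ∃ k, Φ k y = f y) :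
    ∃ k, ∀ y, Φ k y = f y := by
  choose c hcc using h
  have hcont := idx_continuous Φ hc hi f hf c hcc
  obtain ⟨y0⟩ := ‹Nonempty Y›
  refine ⟨c y0, fun y => ?_⟩
  rw [PreconnectedSpace.constant ‹_› hcont (x := y0) (y := y)]
  exact hcc y

lemma global_branches {X : Type*} [TopologicalSpace X] [SimplyConnectedSpace X]
    [LocallyPathConnectedSpace X] {d : ℕ} (R : X → ℂ → Prop)
    (hloc : ∀ x0, ∃ U : Set X, IsOpen U ∧ x0 ∈ U ∧ ∃ ψ : Fin d → X → ℂ,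
      (∀ k, ContinuousOn (ψ k) U) ∧ ∀ x ∈ U, Function.Injective (fun k => ψ k x) ∧
        ∀ z, R x z ↔ ∃ k, ψ k x = z) :
    ∃ Φ : Fin d → X → ℂ, (∀ k, Continuous (Φ k)) ∧
      ∀ x, Function.Injective (fun k => Φ k x) ∧ ∀ z, R x z ↔ ∃ k, Φ k x = z := by
  let E := {p : X × ℂ // R p.1 p.2}
  let f : E → X := fun p => p.1.1
  have hfc : Continuous f := continuous_fst.comp continuous_subtype_val
  have hsc : Continuous (fun e : E => e.1.2) := continuous_snd.comp continuous_subtype_val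
  have cov : IsCoveringMap f := by
    intro x0
    obtain ⟨U, hU, hx0, ψ, hψ, hR⟩ := hloc x0
    apply IsEvenlyCovered.to_isEvenlyCovered_preimage (I := Fin d)
    refine ⟨inferInstance, U, hx0, hU, hU.preimage hfc, ?_⟩
    have hex : ∀ e : f ⁻¹' U, ∃ k, ψ k e.1.1.1 = e.1.1.2 := fun e =>
      ((hR e.1.1.1 e.2).2 _).1 e.1.2
    choose c hc using hex
    have hcc : Continuous c := by
      refine idx_continuous (fun k (e : f ⁻¹' U) => ψ k e.1.1.1) (fun k => ?_) (fun e => ?_)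
        (fun e => e.1.1.2) (hsc.comp continuous_subtype_val) c hc
      · exact (hψ k).comp_continuous (hfc.comp continuous_subtype_val) (fun e => e.2)
      · exact (hR e.1.1.1 e.2).1
    refine ⟨{ toFun := fun e => (⟨f e.1, e.2⟩, c e)
              invFun := fun p => ⟨⟨(p.1.1, ψ p.2 p.1.1), ((hR p.1.1 p.1.2).2 _).2 ⟨_, rfl⟩⟩, p.1.2⟩
              left_inv := ?_
              right_inv := ?_
              continuous_toFun := ?_
              continuous_invFun := ?_ }, fun e => rfl⟩
    · intro e
      apply Subtype.ext; apply Subtype.ext; apply Prod.ext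
      · rfl
      · exact hc e
    · intro p
      apply Prod.ext
      · rfl
      · exact (hR p.1.1 p.1.2).1 (hc ⟨⟨(p.1.1, ψ p.2 p.1.1), ((hR p.1.1 p.1.2).2 _).2 ⟨_, rfl⟩⟩, p.1.2⟩)
    · exact (Continuous.subtype_mk (by fun_prop) _).prodMk hcc
    · refine Continuous.subtype_mk (Continuous.subtype_mk ?_ _) _
      refine Continuous.prodMk (by fun_prop) ?_
      rw [continuous_prod_of_discrete_right]
      intro k
      exact (hψ k).comp_continuous (by fun_prop) (fun e => e.2)
  obtain ⟨x0⟩ : Nonempty X := inferInstance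
  obtain ⟨U, hU, hx0, ψ, hψ, hR⟩ := hloc x0
  have hl : ∀ k, ∃ F : C(X, E), F x0 = ⟨(x0, ψ k x0), ((hR x0 hx0).2 _).2 ⟨k, rfl⟩⟩ ∧
      f ∘ F = ContinuousMap.id X := fun k =>
    (cov.existsUnique_continuousMap_lifts (ContinuousMap.id X) x0 _ rfl).exists
  choose F hF0 hF using hl
  have hF' : ∀ k x, (F k x).1.1 = x := fun k x => congrFun (hF k) x
  have hcont : ∀ k, Continuous (fun x => (F k x).1.2) := fun k => hsc.comp (F k).continuous
  have hroot : ∀ k x, R x (F k x).1.2 := fun k x => by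
    have := (F k x).2
    rwa [hF'] at this
  have hinj : ∀ x, Function.Injective (fun k => (F k x).1.2) := by
    intro x k l hkl
    have h1 : F k x = F l x := by
      apply Subtype.ext; apply Prod.ext
      · rw [hF', hF']
      · exact hkl
    have h2 : (F k : X → E) = F l := cov.eq_of_comp_eq (F k).continuous (F l).continuous
      (by rw [hF, hF]) x h1
    have h3 := congrFun h2 x0
    rw [hF0, hF0] at h3
    have h4 := congrArg (fun e : E => e.1.2) h3
    exact (hR x0 hx0).1 h4
  refine ⟨fun k x => (F k x).1.2, hcont, fun x => ⟨hinj x, fun z => ⟨fun hz => ?_, ?_⟩⟩⟩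
  · obtain ⟨V, hV, hx, θ, hθ, hS⟩ := hloc x
    obtain ⟨k, hk⟩ := ((hS x hx).2 z).1 hz
    have : ∀ l, ∃ m, θ m x = (F l x).1.2 := fun l => ((hS x hx).2 _).1 (hroot l x)
    choose m hm using this
    have hmi : Function.Injective m := by
      intro a b hab
      apply hinj x
      show (F a x).1.2 = (F b x).1.2
      rw [← hm, ← hm, hab]
    obtain ⟨l, hl⟩ := Finite.surjective_of_injective hmi k
    exact ⟨l, by show (F l x).1.2 = z; rw [← hm, hl, hk]⟩
  · rintro ⟨k, rfl⟩
    exact hroot k x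

lemma cycles_lemma {d : ℕ} (π : Equiv.Perm (Fin d)) (J : Finset (Fin d))
    (hJ : ∀ k, k ∈ J ↔ π k ∈ J) :
    ∃ r : ℕ, ∃ rep : Fin r → Fin d, ∃ H : Fin r → ℕ, (∀ i, rep i ∈ J) ∧ (∀ i, 0 < H i) ∧
      ∑ i, H i = J.card ∧ (∀ i, (π ^ H i) (rep i) = rep i) ∧
      ∀ k ∈ J, ∃ i, ∃ m : ℤ, (π ^ m) (rep i) = k := by
  classical
  let S := Equiv.Perm.SameCycle.setoid π
  have hJz : ∀ (m : ℤ) k, (π ^ m) k ∈ J ↔ k ∈ J := by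
    intro m
    induction m using Int.induction_on with
    | zero => simp
    | succ n ih => intro k; rw [zpow_add_one, Equiv.Perm.mul_apply, ih, ← hJ]
    | pred n ih =>
      intro k; rw [zpow_sub_one, Equiv.Perm.mul_apply, ih, hJ (π⁻¹ k)]; simp
  let T : Finset (Quotient S) := J.image (Quotient.mk S)
  let e : T ≃ Fin T.card := T.equivFin
  let rep : Fin T.card → Fin d := fun i => (e.symm i).1.out
  have hmk : ∀ i, Quotient.mk S (rep i) = (e.symm i).1 := fun i => Quotient.out_eq _
  have hrep : ∀ i, rep i ∈ J := by
    intro i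
    obtain ⟨k, hk, hk2⟩ := Finset.mem_image.1 (e.symm i).2
    rw [← hmk] at hk2
    obtain ⟨m, hm⟩ : π.SameCycle k (rep i) := Quotient.exact hk2
    rw [← hm, hJz]; exact hk
  refine ⟨T.card, rep, fun i => Function.minimalPeriod π (rep i), hrep, ?_, ?_, ?_, ?_⟩
  · intro i
    apply Function.minimalPeriod_pos_of_mem_periodicPts
    exact Function.mem_periodicPts.2 ⟨orderOf π, orderOf_pos π, by
      rw [Function.IsPeriodicPt, Function.IsFixedPt, ← Equiv.Perm.coe_pow, pow_orderOf_eq_one]; rfl⟩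
  · rw [Finset.card_eq_sum_card_image (Quotient.mk S) J]
    show _ = ∑ q ∈ T, _
    rw [← Finset.sum_coe_sort T, ← Equiv.sum_comp e.symm]
    refine Finset.sum_congr rfl (fun i _ => ?_)
    have := MulAction.minimalPeriod_eq_card (a := π) (b := rep i)
    show Function.minimalPeriod (π • ·) (rep i) = _
    rw [this, ← Set.toFinset_card]
    congr 1
    ext k
    rw [Set.mem_toFinset, Finset.mem_filter, ← hmk]
    constructor
    · rintro ⟨⟨g, m, rfl⟩, rfl⟩
      refine ⟨(hJz m _).2 (hrep i), ?_⟩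
      apply Quotient.sound
      exact Equiv.Perm.SameCycle.symm ⟨m, rfl⟩
    · rintro ⟨_, h2⟩
      obtain ⟨m, hm⟩ : π.SameCycle (rep i) k := (Quotient.exact h2.symm)
      exact ⟨⟨π ^ m, m, rfl⟩, hm⟩
  · intro i
    rw [Equiv.Perm.coe_pow]
    exact Function.iterate_minimalPeriod
  · intro k hk
    refine ⟨e ⟨Quotient.mk S k, Finset.mem_image_of_mem _ hk⟩, ?_⟩
    have h := hmk (e ⟨Quotient.mk S k, Finset.mem_image_of_mem _ hk⟩)
    rw [Equiv.symm_apply_apply] at h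
    exact Quotient.exact h

/-- implicit function lemma -/
lemma implicit_lemma (F : ℂ × ℂ → ℂ) (hF : ContDiff ℂ 1 F) (u : ℂ × ℂ) (hu : F u = 0) (D : ℂ)
    (hD : HasDerivAt (fun z => F (u.1, z)) D u.2) (hD0 : D ≠ 0) :
    ∃ ψ : ℂ → ℂ, ψ u.1 = u.2 ∧ ContDiffAt ℂ 1 ψ u.1 ∧ (∀ᶠ x in 𝓝 u.1, F (x, ψ x) = 0) ∧
      ∀ᶠ v in 𝓝 u, F v = 0 ↔ ψ v.1 = v.2 := by
  have cdf : ContDiffAt ℂ 1 F u := hF.contDiffAt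
  have inv : (fderiv ℂ F u ∘L .inr ℂ ℂ ℂ).IsInvertible := by
    have h1 : HasFDerivAt F (fderiv ℂ F u) (u.1, u.2) :=
      (hF.differentiable one_ne_zero u).hasFDerivAt
    have h2 : HasFDerivAt (fun z => F (u.1, z)) (fderiv ℂ F u ∘L .inr ℂ ℂ ℂ) u.2 :=
      h1.comp u.2 (hasFDerivAt_prodMk_right u.1 u.2)
    have h3 := h2.unique hD.hasFDerivAt
    rw [h3]
    refine ⟨ContinuousLinearEquiv.unitsEquivAut ℂ (Units.mk0 D hD0), ?_⟩
    ext
    simp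
  refine ⟨cdf.implicitFunction one_ne_zero inv, cdf.implicitFunction_apply_self one_ne_zero inv,
    cdf.contDiffAt_implicitFunction one_ne_zero inv, ?_, ?_⟩
  · have := cdf.eventually_apply_implicitFunction one_ne_zero inv
    rwa [hu] at this
  · have := cdf.eventually_apply_eq_iff_implicitFunction one_ne_zero inv
    rwa [hu] at this

noncomputable def PP (a : ℕ → Polynomial ℂ) (d : ℕ) (ε : ℂ) : Polynomial ℂ :=
  ∑ j ∈ Finset.range (d + 1), Polynomial.C ((a j).eval ε) * Polynomial.X ^ j

lemma PP_eval (a : ℕ → Polynomial ℂ) (d : ℕ) (ε z : ℂ) :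
    (PP a d ε).eval z = ∑ j ∈ Finset.range (d + 1), (a j).eval ε * z ^ j := by
  simp [PP, Polynomial.eval_finsetSum]

lemma PP_coeff (a : ℕ → Polynomial ℂ) (d : ℕ) (ε : ℂ) (n : ℕ) :
    (PP a d ε).coeff n = if n < d + 1 then (a n).eval ε else 0 := by
  simp [PP, Polynomial.finsetSum_coeff, Polynomial.coeff_C_mul, Polynomial.coeff_X_pow]

lemma PP_natDegree (a : ℕ → Polynomial ℂ) (d : ℕ) (ε : ℂ) (h : (a d).eval ε ≠ 0) :
    (PP a d ε).natDegree = d := by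
  apply Polynomial.natDegree_eq_of_le_of_coeff_ne_zero
  · rw [Polynomial.natDegree_le_iff_coeff_eq_zero]
    intro n hn
    rw [PP_coeff, if_neg (by omega)]
  · rw [PP_coeff, if_pos (by omega)]; exact h

lemma PP_leadingCoeff (a : ℕ → Polynomial ℂ) (d : ℕ) (ε : ℂ) (h : (a d).eval ε ≠ 0) :
    (PP a d ε).leadingCoeff = (a d).eval ε := by
  rw [Polynomial.leadingCoeff, PP_natDegree a d ε h, PP_coeff, if_pos (by omega)]

lemma PP_ne_zero (a : ℕ → Polynomial ℂ) (d : ℕ) (ε : ℂ) (h : (a d).eval ε ≠ 0) :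
    PP a d ε ≠ 0 := by
  intro h0
  have := PP_leadingCoeff a d ε h
  rw [h0] at this
  exact h (by simpa using this.symm)

lemma roots_of_inj (p : Polynomial ℂ) (d : ℕ) (hp : p ≠ 0) (hd : p.natDegree = d)
    (ρ : Fin d → ℂ) (hi : Function.Injective ρ) (hr : ∀ k, p.IsRoot (ρ k)) :
    p.roots = (Finset.univ : Finset (Fin d)).val.map ρ := by
  symm
  apply Multiset.eq_of_le_of_card_le
  · rw [Multiset.le_iff_subset (Multiset.Nodup.map hi Finset.univ.nodup)]
    intro z hz
    obtain ⟨k, -, rfl⟩ := Multiset.mem_map.1 hz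
    exact (Polynomial.mem_roots hp).2 (hr k)
  · simpa [hd] using Polynomial.card_roots' p

lemma exists_roots (p : Polynomial ℂ) (d : ℕ) (hp : p ≠ 0) (hd : p.natDegree = d)
    (hs : ∀ z, p.IsRoot z → ¬ (Polynomial.derivative p).IsRoot z) :
    ∃ ρ : Fin d → ℂ, Function.Injective ρ ∧ ∀ k, p.IsRoot (ρ k) := by
  classical
  have hn : p.roots.Nodup := by
    rw [Multiset.nodup_iff_count_le_one]
    intro z
    rw [Polynomial.count_roots]
    by_contra h
    push Not at h
    have := (Polynomial.one_lt_rootMultiplicity_iff_isRoot hp).1 h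
    exact hs z this.1 this.2
  have hc : p.roots.toFinset.card = d := by
    rw [Multiset.toFinset_card_of_nodup hn, ← hd]
    exact (IsAlgClosed.splits p).natDegree_eq_card_roots.symm
  let e := p.roots.toFinset.equivFinOfCardEq hc
  refine ⟨fun k => (e.symm k).1, fun k l h => e.symm.injective (Subtype.ext h), fun k => ?_⟩
  have := (e.symm k).2
  rw [Multiset.mem_toFinset] at this
  exact Polynomial.isRoot_of_mem_roots this

lemma roots_iff (p : Polynomial ℂ) (d : ℕ) (hp : p ≠ 0) (hd : p.natDegree = d)
    (ρ : Fin d → ℂ) (hi : Function.Injective ρ) (hr : ∀ k, p.IsRoot (ρ k)) (z : ℂ) :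
    p.IsRoot z ↔ ∃ k, ρ k = z := by
  rw [← Polynomial.mem_roots hp, roots_of_inj p d hp hd ρ hi hr]
  simp

noncomputable abbrev qq (w : ℂ) : ℂ := Function.Periodic.qParam 1 w

lemma F_contDiff (a : ℕ → Polynomial ℂ) (d : ℕ) :
    ContDiff ℂ 1 (fun v : ℂ × ℂ => (PP a d (qq v.1)).eval v.2) := by
  simp only [PP_eval]
  refine ContDiff.sum (fun j _ => ?_)
  refine ContDiff.mul ?_ (contDiff_snd.pow j)
  have h : ContDiff ℂ 1 (fun ε : ℂ => (a j).eval ε) := by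
    simpa using (Polynomial.contDiff_aeval (𝕜 := ℂ) (a j) 1)
  exact h.comp ((Function.Periodic.contDiff_qParam 1).comp contDiff_fst)

lemma implicit_PP (a : ℕ → Polynomial ℂ) (d : ℕ) (w0 z0 : ℂ) (h0 : (PP a d (qq w0)).IsRoot z0)
    (hs : ¬ (Polynomial.derivative (PP a d (qq w0))).IsRoot z0) :
    ∃ ψ : ℂ → ℂ, ψ w0 = z0 ∧ ContDiffAt ℂ 1 ψ w0 ∧
      (∀ᶠ x in 𝓝 w0, (PP a d (qq x)).IsRoot (ψ x)) ∧
      ∀ᶠ v in 𝓝 (w0, z0), (PP a d (qq v.1)).IsRoot v.2 ↔ ψ v.1 = v.2 :=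
  implicit_lemma (fun v : ℂ × ℂ => (PP a d (qq v.1)).eval v.2) (F_contDiff a d) (w0, z0) h0 _
    ((PP a d (qq w0)).hasDerivAt z0) hs

lemma continuous_coeff (p : Polynomial ℂ) : Continuous (fun w => p.eval (qq w)) :=
  p.continuous.comp Function.Periodic.continuous_qParam

lemma local_branches (a : ℕ → Polynomial ℂ) (d : ℕ) (w0 : ℂ) (had : (a d).eval (qq w0) ≠ 0)
    (hs : ∀ z, (PP a d (qq w0)).IsRoot z → ¬ (Polynomial.derivative (PP a d (qq w0))).IsRoot z) :
    ∃ U : Set ℂ, IsOpen U ∧ w0 ∈ U ∧ ∃ ψ : Fin d → ℂ → ℂ,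
      (∀ k, ContinuousOn (ψ k) U) ∧ ∀ x ∈ U, Function.Injective (fun k => ψ k x) ∧
        ∀ z, (PP a d (qq x)).IsRoot z ↔ ∃ k, ψ k x = z := by
  obtain ⟨ρ, hρ, hr⟩ := exists_roots _ d (PP_ne_zero a d _ had) (PP_natDegree a d _ had) hs
  have := fun k => implicit_PP a d w0 (ρ k) (hr k) (hs _ (hr k))
  choose ψ h1 h2 h3 _ using this
  have hA : ∀ᶠ x in 𝓝 w0, (a d).eval (qq x) ≠ 0 :=
    (continuous_coeff (a d)).continuousAt.eventually_ne had
  have hB : ∀ᶠ x in 𝓝 w0, ∀ k, ContinuousAt (ψ k) x := by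
    rw [eventually_all]
    intro k
    filter_upwards [(h2 k).eventually (by simp)] with x hx using hx.continuousAt
  have hC : ∀ᶠ x in 𝓝 w0, ∀ k, (PP a d (qq x)).IsRoot (ψ k x) := eventually_all.2 h3
  have hD : ∀ᶠ x in 𝓝 w0, ∀ k l, k ≠ l → ψ k x ≠ ψ l x := by
    rw [eventually_all]; intro k
    rw [eventually_all]; intro l
    by_cases hkl : k = l
    · exact Eventually.of_forall (fun x h => (h hkl).elim)
    have : ψ k w0 ≠ ψ l w0 := by rw [h1, h1]; exact fun h => hkl (hρ h)
    filter_upwards [((h2 k).continuousAt.ne_iff_eventually_ne (h2 l).continuousAt).1 this] with x hx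
    exact fun _ => hx
  obtain ⟨U, hU, hUo, hwU⟩ := eventually_nhds_iff.1 (hA.and (hB.and (hC.and hD)))
  refine ⟨U, hUo, hwU, ψ, fun k x hx => ((hU x hx).2.1 k).continuousWithinAt, fun x hx => ?_⟩
  obtain ⟨hA, hB, hC, hD⟩ := hU x hx
  have hi : Function.Injective (fun k => ψ k x) := by
    intro k l h
    by_contra hkl
    exact hD k l hkl h
  exact ⟨hi, fun z => roots_iff _ d (PP_ne_zero a d _ hA) (PP_natDegree a d _ hA) _ hi hC z⟩

lemma branches (a : ℕ → Polynomial ℂ) (d : ℕ) (c : ℝ)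
    (had : ∀ w : ℂ, c < w.im → (a d).eval (qq w) ≠ 0)
    (hs : ∀ w : ℂ, c < w.im → ∀ z, (PP a d (qq w)).IsRoot z →
      ¬ (Polynomial.derivative (PP a d (qq w))).IsRoot z) :
    ∃ Φ : Fin d → ℂ → ℂ, (∀ k w, c < w.im → DifferentiableAt ℂ (Φ k) w) ∧
      (∀ w : ℂ, c < w.im → Function.Injective (fun k => Φ k w) ∧
        ∀ z, (PP a d (qq w)).IsRoot z ↔ ∃ k, Φ k w = z) ∧
      ∃ π : Equiv.Perm (Fin d), ∀ k w, Φ k (w + 1) = Φ (π k) w := by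
  let S : Set ℂ := {w : ℂ | c < w.im}
  have hSo : IsOpen S := isOpen_lt continuous_const Complex.continuous_im
  have hSc : Convex ℝ S := convex_halfSpace_im_gt c
  have hSn : S.Nonempty := ⟨⟨0, c + 1⟩, by show c < c + 1; linarith⟩
  have : ContractibleSpace S := hSc.contractibleSpace hSn
  have : LocallyPathConnectedSpace S := hSo.locallyPathConnectedSpace
  obtain ⟨Φ, hΦc, hΦ⟩ := global_branches (X := S) (d := d)
    (fun w z => (PP a d (qq w)).IsRoot z) (by
      intro w0
      obtain ⟨U, hU, hwU, ψ, hψ, h⟩ := local_branches a d w0 (had _ w0.2) (hs _ w0.2)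
      refine ⟨Subtype.val ⁻¹' U, hU.preimage continuous_subtype_val, hwU, fun k x => ψ k x,
        fun k => (hψ k).comp continuous_subtype_val.continuousOn (fun x hx => hx), fun x hx => h x hx⟩)
  have hper : ∀ w, qq (w + 1) = qq w := by
    intro w
    simp only [qq, Function.Periodic.qParam]
    rw [← Complex.exp_periodic (2 * Real.pi * Complex.I * w / (1 : ℝ))]
    congr 1
    push_cast; ring
  have him : ∀ w : ℂ, (w + 1).im = w.im := by intro w; simp
  let T : S → S := fun w => ⟨w.1 + 1, by show c < (w.1 + 1).im; rw [him]; exact w.2⟩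
  have hT : Continuous T := by fun_prop
  have hsel : ∀ k, ∃ l, ∀ w, Φ l w = Φ k (T w) := by
    intro k
    refine sel_const Φ hΦc (fun w => (hΦ w).1) (fun w => Φ k (T w)) ((hΦc k).comp hT) (fun w => ?_)
    rw [← (hΦ w).2, ← hper]
    exact ((hΦ (T w)).2 _).2 ⟨k, rfl⟩
  choose π0 hπ0 using hsel
  have hπi : Function.Injective π0 := by
    intro k l h
    obtain ⟨w⟩ : Nonempty S := inferInstance
    apply (hΦ (T w)).1
    show Φ k (T w) = Φ l (T w)
    rw [← hπ0, ← hπ0, h]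
  classical
  refine ⟨fun k w => if h : c < w.im then Φ k ⟨w, h⟩ else 0, ?_, ?_,
    Equiv.ofBijective π0 (Finite.injective_iff_bijective.1 hπi), ?_⟩
  · intro k w hw
    have hroot := ((hΦ ⟨w, hw⟩).2 _).2 ⟨k, rfl⟩
    obtain ⟨ψ, h1, h2, h3, h4⟩ := implicit_PP a d w (Φ k ⟨w, hw⟩) hroot (hs w hw _ hroot)
    refine (h2.differentiableAt one_ne_zero).congr_of_eventuallyEq ?_
    have hcont : ContinuousAt (fun w => if h : c < w.im then Φ k ⟨w, h⟩ else 0) w := by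
      have : ContinuousOn (fun w => if h : c < w.im then Φ k ⟨w, h⟩ else 0) S := by
        rw [continuousOn_iff_continuous_domRestrict]
        refine (hΦc k).congr (fun x => ?_)
        have : c < x.1.im := x.2
        simp only [Set.domRestrict_apply]
        rw [dif_pos this]
      exact this.continuousAt (hSo.mem_nhds hw)
    have ht : Tendsto (fun x => (x, if h : c < x.im then Φ k ⟨x, h⟩ else 0)) (𝓝 w)
        (𝓝 (w, Φ k ⟨w, hw⟩)) := by
      have := (continuousAt_id (x := w)).prodMk hcont
      unfold ContinuousAt at this
      simpa [hw] using this
    filter_upwards [ht.eventually h4, hSo.mem_nhds hw] with x hx hxS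
    have hxS : c < x.im := hxS
    simp only [hxS, dif_pos] at hx ⊢
    exact (hx.1 (((hΦ ⟨x, hxS⟩).2 _).2 ⟨k, rfl⟩)).symm
  · intro w hw
    simp only [hw, dif_pos]
    exact hΦ ⟨w, hw⟩
  · intro k w
    simp only [him]
    split_ifs with h
    · exact (hπ0 k ⟨w, h⟩).symm
    · rfl

lemma exists_level (m : ℝ) (hm : 0 < m) : ∃ c : ℝ, ∀ w : ℂ, ‖qq w‖ < m ↔ c < w.im := by
  refine ⟨-Real.log m / (2 * Real.pi), fun w => ?_⟩
  rw [← Function.Periodic.norm_qParam_lt_iff one_pos]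
  have : -2 * Real.pi * (-Real.log m / (2 * Real.pi)) / 1 = Real.log m := by
    field_simp
  rw [this, Real.exp_log hm]

lemma eventually_Iinf (p : ℂ → Prop) :
    (∀ᶠ w in comap Complex.im atTop, p w) ↔ ∃ A : ℝ, ∀ w : ℂ, A < w.im → p w := by
  rw [(atTop_basis_Ioi.comap Complex.im).eventually_iff]
  simp

lemma qq_tendsto : Tendsto qq (comap Complex.im atTop) (𝓝 0) :=
  (Function.Periodic.qParam_tendsto one_pos).mono_right nhdsWithin_le_nhds

lemma bounded_roots (a : ℕ → Polynomial ℂ) (d : ℕ) (had : (a d).eval 0 ≠ 0) :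
    ∃ B : ℝ, ∀ᶠ ε in 𝓝 (0 : ℂ), ∀ z, (PP a d ε).IsRoot z → ‖z‖ ≤ B := by
  have hcont : ∀ j, ContinuousAt (fun ε => (a j).eval ε) 0 := fun j => (a j).continuous.continuousAt
  let M : NNReal := ∑ j ∈ Finset.range (d + 1), (‖(a j).eval 0‖₊ + 1)
  have h1 : ∀ᶠ ε in 𝓝 (0 : ℂ), ∀ j ∈ Finset.range (d + 1), ‖(a j).eval ε‖₊ ≤ M := by
    rw [Filter.eventually_all_finset]
    intro j hj
    have : ‖(a j).eval 0‖₊ < ‖(a j).eval 0‖₊ + 1 := lt_add_one _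
    filter_upwards [(hcont j).nnnorm.eventually_lt_const this] with ε h
    exact h.le.trans (Finset.single_le_sum (f := fun j => ‖(a j).eval 0‖₊ + 1)
      (fun _ _ => zero_le) hj)
  let b : NNReal := ‖(a d).eval 0‖₊ / 2
  have hb0 : 0 < b := by
    have : 0 < ‖(a d).eval 0‖₊ := nnnorm_pos.2 had
    exact half_pos this
  have h2 : ∀ᶠ ε in 𝓝 (0 : ℂ), b < ‖(a d).eval ε‖₊ := by
    have : b < ‖(a d).eval 0‖₊ := NNReal.half_lt_self (by simpa using had)
    exact (hcont d).nnnorm.eventually_const_lt this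
  refine ⟨(M / b + 1 : NNReal), ?_⟩
  filter_upwards [h1, h2] with ε h1 h2 z hz
  have hne : (a d).eval ε ≠ 0 := by
    intro h
    rw [h] at h2
    simp at h2
  have h3 := Polynomial.IsRoot.norm_lt_cauchyBound (PP_ne_zero a d ε hne) hz
  refine (NNReal.coe_le_coe.2 h3.le).trans ?_
  rw [NNReal.coe_le_coe, Polynomial.cauchyBound, PP_leadingCoeff a d ε hne]
  gcongr
  apply Finset.sup_le
  intro j hj
  rw [PP_natDegree a d ε hne, Finset.mem_range] at hj
  rw [PP_coeff, if_pos (by omega)]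
  exact h1 j (Finset.mem_range.2 (by omega))

lemma PP_prod (a : ℕ → Polynomial ℂ) (d : ℕ) (ε : ℂ) (had : (a d).eval ε ≠ 0)
    (ρ : Fin d → ℂ) (hi : Function.Injective ρ) (hr : ∀ k, (PP a d ε).IsRoot (ρ k)) (z : ℂ) :
    (PP a d ε).eval z = (a d).eval ε * ∏ k, (z - ρ k) := by
  have h1 := roots_of_inj _ d (PP_ne_zero a d ε had) (PP_natDegree a d ε had) ρ hi hr
  have h2 := (IsAlgClosed.splits (PP a d ε)).eq_prod_roots
  rw [h1, PP_leadingCoeff a d ε had] at h2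
  rw [h2, Multiset.map_map, Polynomial.eval_mul, Polynomial.eval_C]
  change _ * Polynomial.eval z (∏ k, (Polynomial.X - Polynomial.C (ρ k))) = _
  simp [Polynomial.eval_prod]

theorem stmt9 (d : ℕ) (a : ℕ → Polynomial ℂ)
    (P : ℂ → Polynomial ℂ)
    (hP : ∀ ε : ℂ, P ε = ∑ j ∈ Finset.range (d + 1),
        Polynomial.C ((a j).eval ε) * Polynomial.X ^ j)
    (had : (a d).eval 0 ≠ 0)
    (l₀ : ℂ) (s : ℕ) (hs : (P 0).rootMultiplicity l₀ = s) (hs1 : 1 < s)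
    (σ₀ : ℝ) (hσ₀ : 0 < σ₀)
    (hsimple : ∀ ε : ℂ, 0 < ‖ε‖ → ‖ε‖ < σ₀ → ∀ z : ℂ, (P ε).IsRoot z →
        ¬(Polynomial.derivative (P ε)).IsRoot z) :
    ∃ δ > (0 : ℝ), ∃ σ : ℝ, 0 < σ ∧ σ ≤ σ₀ ∧ ∃ r : ℕ, 1 ≤ r ∧ ∃ H : Fin r → ℕ,
      (∀ i, 0 < H i) ∧ (∑ i, H i) = s ∧ ∃ g : Fin r → ℂ → ℂ,
      (∀ i, AnalyticAt ℂ (g i) 0) ∧ (∀ i, g i 0 = l₀) ∧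
      ∀ ε : ℂ, 0 < ‖ε‖ → ‖ε‖ < σ →
        ({z : ℂ | (P ε).IsRoot z ∧ ‖z - l₀‖ < δ}
            = ⋃ i, g i '' {ζ : ℂ | ζ ^ (H i) = ε}) ∧
        {z : ℂ | (P ε).IsRoot z ∧ ‖z - l₀‖ < δ}.ncard = s := by
  classical
  have hPP : P = PP a d := funext hP
  subst hPP
  clear hP
  have hqpos : ∀ w, 0 < ‖qq w‖ := fun w => norm_pos_iff.2 (Function.Periodic.qParam_ne_zero w)
  -- choose the half plane
  obtain ⟨ε₀, hε₀, hball⟩ := Metric.eventually_nhds_iff.1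
    ((a d).continuous.continuousAt.eventually_ne had)
  obtain ⟨c, hc⟩ := exists_level (min ε₀ σ₀) (lt_min hε₀ hσ₀)
  have hadc : ∀ w : ℂ, c < w.im → (a d).eval (qq w) ≠ 0 := by
    intro w hw
    apply hball
    rw [dist_zero_right]
    exact ((hc w).2 hw).trans_le (min_le_left _ _)
  obtain ⟨Φ, hdiff, hΦ, π, hπ⟩ := branches a d c hadc
    (fun w hw z hz => hsimple _ (hqpos w) (((hc w).2 hw).trans_le (min_le_right _ _)) z hz)
  -- shifts by integers
  have hshift : ∀ (m : ℤ) k w, Φ k (w + m) = Φ ((π ^ m) k) w := by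
    intro m
    induction m using Int.induction_on with
    | zero => intro k w; simp
    | succ n ih =>
      intro k w
      rw [zpow_add_one, Equiv.Perm.mul_apply, ← ih, ← hπ]
      push_cast; ring_nf
    | pred n ih =>
      intro k w
      rw [zpow_sub_one, Equiv.Perm.mul_apply, ← ih]
      have := hπ (π⁻¹ k) (w + ((-n : ℤ) : ℂ) - 1)
      rw [sub_add_cancel, show π (π⁻¹ k) = k by simp] at this
      rw [this]
      push_cast; ring_nf
  have hperiodic : ∀ (H : ℕ) k, (π ^ H) k = k → Function.Periodic (Φ k) ((H : ℝ) : ℂ) := by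
    intro H k hk w
    have := hshift (H : ℤ) k w
    rw [zpow_natCast, hk] at this
    rw [← this]
    push_cast; rfl
  have hhol : ∀ k, ∀ᶠ w in comap Complex.im atTop, DifferentiableAt ℂ (Φ k) w := fun k =>
    (eventually_Iinf _).2 ⟨c, hdiff k⟩
  have hbd : ∀ k, BoundedAtFilter (comap Complex.im atTop) (Φ k) := by
    intro k
    obtain ⟨B, hB⟩ := bounded_roots a d had
    apply Asymptotics.IsBigO.of_bound B
    filter_upwards [qq_tendsto.eventually hB, (eventually_Iinf (fun w => c < w.im)).2 ⟨c, fun w h => h⟩]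
      with w hw hcw
    simpa using hw _ (((hΦ w hcw).2 _).2 ⟨k, rfl⟩)
  have hne : (comap Complex.im atTop).NeBot := atTop_neBot.comap_of_surj Complex.im_surjective
  -- limits
  have hlim : ∀ k, ∃ l, Tendsto (Φ k) (comap Complex.im atTop) (𝓝 l) := fun k =>
    ⟨_, Function.Periodic.tendsto_at_I_inf (h := (orderOf π : ℝ)) (by exact_mod_cast orderOf_pos π)
      (hperiodic _ k (by rw [pow_orderOf_eq_one]; rfl)) (hhol k) (hbd k)⟩
  choose l hl using hlim
  have hlπ : ∀ k, l (π k) = l k := by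
    intro k
    refine tendsto_nhds_unique (hl (π k)) ?_
    have : Tendsto (fun w : ℂ => w + 1) (comap Complex.im atTop) (comap Complex.im atTop) := by
      rw [tendsto_comap_iff]
      have : Complex.im ∘ (fun w : ℂ => w + 1) = Complex.im := by ext w; simp
      rw [this]
      exact tendsto_comap
    refine ((hl k).comp this).congr (fun w => ?_)
    exact hπ k w
  have hlπz : ∀ (m : ℤ) k, l ((π ^ m) k) = l k := by
    intro m
    induction m using Int.induction_on with
    | zero => intro k; simp
    | succ n ih => intro k; rw [zpow_add_one, Equiv.Perm.mul_apply, ih, hlπ]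
    | pred n ih =>
      intro k; rw [zpow_sub_one, Equiv.Perm.mul_apply, ih, ← hlπ (π⁻¹ k)]; simp
  -- limit factorization
  have hfac : PP a d 0 = Polynomial.C ((a d).eval 0) * ∏ k, (Polynomial.X - Polynomial.C (l k)) := by
    apply Polynomial.funext
    intro z
    have h1 : Tendsto (fun w => (PP a d (qq w)).eval z) (comap Complex.im atTop)
        (𝓝 ((PP a d 0).eval z)) := by
      simp only [PP_eval]
      refine tendsto_finsetSum _ (fun j _ => Tendsto.mul_const _ ?_)
      exact ((a j).continuous.tendsto 0).comp qq_tendsto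
    have h2 : Tendsto (fun w => (a d).eval (qq w) * ∏ k, (z - Φ k w)) (comap Complex.im atTop)
        (𝓝 ((a d).eval 0 * ∏ k, (z - l k))) := by
      refine Tendsto.mul (((a d).continuous.tendsto 0).comp qq_tendsto) ?_
      exact tendsto_finsetProd _ (fun k _ => tendsto_const_nhds.sub (hl k))
    have h3 : (PP a d 0).eval z = (a d).eval 0 * ∏ k, (z - l k) := by
      refine tendsto_nhds_unique h1 (h2.congr' ?_)
      refine (eventually_Iinf _).2 ⟨c, fun w hw => ?_⟩
      exact (PP_prod a d _ (hadc w hw) _ (hΦ w hw).1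
        (fun k => ((hΦ w hw).2 _).2 ⟨k, rfl⟩) z).symm
    rw [h3]
    simp [Polynomial.eval_prod]
  let J : Finset (Fin d) := Finset.univ.filter (fun k => l k = l₀)
  have hJ : ∀ k, k ∈ J ↔ l k = l₀ := fun k => by simp [J]
  have hJs : J.card = s := by
    rw [← hs, ← Polynomial.count_roots, hfac, Polynomial.roots_C_mul _ had,
      show (∏ k, (Polynomial.X - Polynomial.C (l k))) =
        ((((Finset.univ : Finset (Fin d)).val.map l)).map
          (fun x => Polynomial.X - Polynomial.C x)).prod by rw [Multiset.map_map]; rfl,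
      Polynomial.roots_multiset_prod_X_sub_C, Multiset.count_map]
    simp only [J, eq_comm]
    rfl
  obtain ⟨r, rep, H, hrepJ, hHpos, hHsum, hHper, hHex⟩ := cycles_lemma π J
    (fun k => by rw [hJ, hJ, hlπ])
  -- δ
  obtain ⟨δ, hδ, hδl⟩ : ∃ δ > (0 : ℝ), ∀ k, l k ≠ l₀ → δ < ‖l k - l₀‖ := by
    have : ∀ᶠ δ in 𝓝[>] (0 : ℝ), ∀ k, l k ≠ l₀ → δ < ‖l k - l₀‖ := by
      rw [eventually_all]
      intro k
      by_cases hk : l k = l₀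
      · exact Eventually.of_forall (fun _ h => (h hk).elim)
      · have : 0 < ‖l k - l₀‖ := norm_pos_iff.2 (sub_ne_zero.2 hk)
        filter_upwards [nhdsWithin_le_nhds (eventually_lt_nhds this)] with x hx _ using hx
    obtain ⟨δ, h1, h2⟩ := (this.and self_mem_nhdsWithin).exists
    exact ⟨δ, h2, h1⟩
  have hev : ∀ᶠ w in comap Complex.im atTop, ∀ k, ‖Φ k w - l₀‖ < δ ↔ k ∈ J := by
    rw [eventually_all]
    intro k
    have ht : Tendsto (fun w => ‖Φ k w - l₀‖) (comap Complex.im atTop) (𝓝 ‖l k - l₀‖) :=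
      ((hl k).sub_const l₀).norm
    by_cases hk : l k = l₀
    · have : ‖l k - l₀‖ < δ := by simpa [hk] using hδ
      filter_upwards [ht.eventually_lt_const this] with w hw
      exact ⟨fun _ => (hJ k).2 hk, fun _ => hw⟩
    · filter_upwards [ht.eventually_const_lt (hδl k hk)] with w hw
      exact ⟨fun h => (lt_asymm h hw).elim, fun h => (hk ((hJ k).1 h)).elim⟩
  obtain ⟨A, hA⟩ := (eventually_Iinf _).1 hev
  let A' := max A c
  let σ : ℝ := min σ₀ (Real.exp (-2 * Real.pi * A' / 1))
  refine ⟨δ, hδ, σ, lt_min hσ₀ (Real.exp_pos _), min_le_left _ _, r, ?_, H, hHpos,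
    hHsum.trans hJs, fun i => Function.Periodic.cuspFunction (H i : ℝ) (Φ (rep i)), ?_, ?_, ?_⟩
  · rcases Nat.eq_zero_or_pos r with h | h
    · subst h
      simp at hHsum
      omega
    · exact h
  · intro i
    have hH : (0 : ℝ) < H i := by exact_mod_cast hHpos i
    have hp := hperiodic _ _ (hHper i)
    rw [Complex.analyticAt_iff_eventually_differentiableAt]
    have h1 := Function.Periodic.eventually_differentiableAt_cuspFunction_nhds_ne_zero hH hp (hhol _)
    have h2 := Function.Periodic.differentiableAt_cuspFunction_zero hH hp (hhol _) (hbd _)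
    rw [eventually_nhdsWithin_iff] at h1
    filter_upwards [h1] with x hx
    by_cases h : x = 0
    · rw [h]; exact h2
    · exact hx h
  · intro i
    have hH : (0 : ℝ) < H i := by exact_mod_cast hHpos i
    have hp := hperiodic _ _ (hHper i)
    rw [← (hJ _).1 (hrepJ i)]
    exact tendsto_nhds_unique
      (Function.Periodic.tendsto_at_I_inf hH hp (hhol _) (hbd _)) (hl (rep i))
  · intro ε hε0 hεσ
    let w := Function.Periodic.invQParam 1 ε
    have hw : qq w = ε := Function.Periodic.qParam_right_inv one_ne_zero (norm_pos_iff.1 hε0)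
    have hwA : A' < w.im := by
      rw [← Function.Periodic.norm_qParam_lt_iff one_pos]
      rw [show Function.Periodic.qParam 1 w = ε from hw]
      exact hεσ.trans_le (min_le_right _ _)
    have hwc : c < w.im := (le_max_right _ _).trans_lt hwA
    have hwA : A < w.im := (le_max_left _ _).trans_lt hwA
    have hset : {z : ℂ | (PP a d ε).IsRoot z ∧ ‖z - l₀‖ < δ} = (fun k => Φ k w) '' (J : Set (Fin d)) := by
      ext z
      rw [← hw]
      constructor
      · rintro ⟨h1, h2⟩
        obtain ⟨k, rfl⟩ := ((hΦ w hwc).2 z).1 h1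
        exact ⟨k, (hA w hwA k).1 h2, rfl⟩
      · rintro ⟨k, hk, rfl⟩
        exact ⟨((hΦ w hwc).2 _).2 ⟨k, rfl⟩, (hA w hwA k).2 hk⟩
    rw [hset]
    constructor
    · ext z
      rw [Set.mem_iUnion]
      constructor
      · rintro ⟨k, hk, rfl⟩
        obtain ⟨i, m, hm⟩ := hHex k hk
        have hH : (H i : ℝ) ≠ 0 := by exact_mod_cast (hHpos i).ne'
        refine ⟨i, Function.Periodic.qParam (H i : ℝ) (w + m), ?_, ?_⟩
        · show _ = ε
          rw [← hw, qq, Function.Periodic.qParam, Function.Periodic.qParam, ← Complex.exp_nat_mul,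
            Complex.exp_eq_exp_iff_exists_int]
          refine ⟨m, ?_⟩
          have : (H i : ℂ) ≠ 0 := by exact_mod_cast (hHpos i).ne'
          push_cast
          field_simp
        · show Function.Periodic.cuspFunction _ _ _ = _
          rw [Function.Periodic.eq_cuspFunction hH (hperiodic _ _ (hHper i)), hshift, hm]
      · rintro ⟨i, ζ, hζ, rfl⟩
        have hζ : ζ ^ H i = ε := hζ
        have hH : (H i : ℝ) ≠ 0 := by exact_mod_cast (hHpos i).ne'
        have hζ0 : ζ ≠ 0 := by
          rintro rfl
          rw [zero_pow (hHpos i).ne'] at hζ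
          rw [← hζ] at hε0
          simp at hε0
        have hq := Function.Periodic.qParam_right_inv hH hζ0
        set v := Function.Periodic.invQParam (H i : ℝ) ζ with hv
        obtain ⟨m, hm⟩ : ∃ m : ℤ, v = w + m := by
          rw [← hq, ← hw, qq, Function.Periodic.qParam, Function.Periodic.qParam,
            ← Complex.exp_nat_mul, Complex.exp_eq_exp_iff_exists_int] at hζ
          obtain ⟨m, hm⟩ := hζ
          refine ⟨m, ?_⟩
          have : (H i : ℂ) ≠ 0 := by exact_mod_cast (hHpos i).ne'
          have hpi := Complex.two_pi_I_ne_zero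
          push_cast at hm
          field_simp at hm
          exact hm
        refine ⟨(π ^ m) (rep i), ?_, ?_⟩
        · rw [Finset.mem_coe, hJ, hlπz]
          exact (hJ _).1 (hrepJ i)
        · show _ = Function.Periodic.cuspFunction _ _ _
          rw [← hq, Function.Periodic.eq_cuspFunction hH (hperiodic _ _ (hHper i)), hm, hshift]
    · rw [Set.ncard_image_of_injective _ (hΦ w hwc).1, Set.ncard_coe_finset, hJs]
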